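/- arXiv:2312.08696 — 2 statements merged into one kernel-verified Lean document; each statement's English description precedes it below -/
import Mathlib

section
/- Let u, v, w : ℝ² → ℝ² be continuously differentiable vector fields with compact support. Then b_emac(u,v,w) = b_conv(v,u,w) + b_conv(w,u,v) − b_conv(u,v,w) − b_conv(u,w,v). -/
open MeasureTheory RealInnerProductSpace

noncomputable section

abbrev E2 := EuclideanSpace ℝ (Fin 2)

/-- divergence of a vector field on ℝ² -/
def dvg (u : E2 → E2) (x : E2) : ℝ :=
  ∑ i, fderiv ℝ u x (EuclideanSpace.single i 1) i

/-- convective trilinear form  b_conv(u,v,w) = ∫ ((u·∇)v)·w -/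
def bConv (u v w : E2 → E2) : ℝ :=
  ∫ x, ⟪fderiv ℝ v x (u x), w x⟫

/-- EMAC trilinear form  b_emac(u,v,w) = ∫ (2D(u)v)·w + (∇·u)(v·w),
where (2D(u)v)·w = (∇u v)·w + (∇u w)·v. -/
def bEmac (u v w : E2 → E2) : ℝ :=
  ∫ x, (⟪fderiv ℝ u x (v x), w x⟫ + ⟪fderiv ℝ u x (w x), v x⟫
    + dvg u x * ⟪v x, w x⟫)

/-- L² norm -/
def l2Norm {F : Type*} [NormedAddCommGroup F] (f : E2 → F) : ℝ :=
  (∫ x, ‖f x‖ ^ 2) ^ ((1 : ℝ) / 2)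

/-- H¹ norm -/
def h1Norm (f : E2 → E2) : ℝ := l2Norm f + l2Norm (fderiv ℝ f)

/-- H² norm -/
def h2Norm (f : E2 → E2) : ℝ :=
  l2Norm f + l2Norm (fderiv ℝ f) + l2Norm (fderiv ℝ (fderiv ℝ f))

/-- rotational field φ(x₁,x₂) = (−x₂, x₁) -/
def phi : E2 → E2 := fun x => (WithLp.equiv 2 (Fin 2 → ℝ)).symm ![-x 1, x 0]

/-!
The product rule for the field `⟪v, w⟫ u` reads
`∇·(⟪v, w⟫ u) = (∇·u) ⟪v, w⟫ + ⟪(u·∇)v, w⟫ + ⟪(u·∇)w, v⟫`, so up to a divergence the term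
`(∇·u)(v·w)` of the EMAC form is `-(u·∇)v·w - (u·∇)w·v`, and divergences integrate to zero. Every
field occurring here vanishes where one of `u`, `v`, `w` vanishes on a neighbourhood, so
compactness of the common support gives integrability throughout.
-/

section Divergence

variable {E F : Type*} [NormedAddCommGroup E] [NormedSpace ℝ E]
  [NormedAddCommGroup F] [NormedSpace ℝ F]

/-- The divergence of a vector field, as the trace of its derivative. It is meant for
finite-dimensional `E`, where it needs no choice of basis; otherwise the trace is `0` by
convention. -/
def divergence (u : E → E) (x : E) : ℝ :=
  LinearMap.trace ℝ E (fderiv ℝ u x)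

variable [FiniteDimensional ℝ E]

theorem divergence_smul {g : E → ℝ} {u : E → E} {x : E}
    (hg : DifferentiableAt ℝ g x) (hu : DifferentiableAt ℝ u x) :
    divergence (fun y => g y • u y) x = g x * divergence u x + fderiv ℝ g x (u x) := by
  simp [divergence, fderiv_fun_smul hg hu, LinearMap.trace_smulRight]

/-- The trace of an endomorphism as a continuous linear functional. -/
def traceCLM : (E →L[ℝ] E) →L[ℝ] ℝ :=
  (LinearMap.trace ℝ E ∘ₗ ContinuousLinearMap.coeLM ℝ).toContinuousLinearMap

theorem traceCLM_fderiv (u : E → E) (x : E) : traceCLM (fderiv ℝ u x) = divergence u x :=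
  rfl

theorem continuous_divergence {u : E → E} (hu : ContDiff ℝ 1 u) : Continuous (divergence u) :=
  traceCLM.continuous.comp (hu.continuous_fderiv one_ne_zero)

variable [MeasurableSpace E] [BorelSpace E] {μ : Measure E} [μ.IsAddHaarMeasure]

theorem integral_fderiv_apply_eq_zero {f : E → F} {a : E} (hf : Differentiable ℝ f)
    (hfi : Integrable f μ) (hf'i : Integrable (fun x => fderiv ℝ f x a) μ) :
    ∫ x, fderiv ℝ f x a ∂μ = 0 := by
  have by_parts := integral_smul_fderiv_eq_neg_fderiv_smul_of_integrable (μ := μ) (𝕜 := ℝ)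
    (f := fun _ => 1) (g := f) (v := a) (by simp) (by simpa using hf'i) (by simpa using hfi)
    (fun _ _ => differentiableAt_const _) (fun x _ => hf x)
  simpa using by_parts

theorem integral_divergence_eq_zero {u : E → E} (hu : Differentiable ℝ u)
    (hui : Integrable u μ) (hu'i : Integrable (fderiv ℝ u) μ) :
    ∫ x, divergence u x ∂μ = 0 := by
  have integral_fderiv : ∫ x, fderiv ℝ u x ∂μ = 0 := by
    ext1 a
    rw [ContinuousLinearMap.integral_apply hu'i, zero_apply,
      integral_fderiv_apply_eq_zero hu hui (hu'i.apply_continuousLinearMap a)]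
  calc ∫ x, divergence u x ∂μ
      = ∫ x, traceCLM (fderiv ℝ u x) ∂μ := by simp only [traceCLM_fderiv]
    _ = traceCLM (∫ x, fderiv ℝ u x ∂μ) := traceCLM.integral_comp_comm hu'i
    _ = 0 := by rw [integral_fderiv, map_zero]

end Divergence

section TrilinearForms

variable {E : Type*} [NormedAddCommGroup E] [InnerProductSpace ℝ E] {u v w : E → E}

theorem divergence_inner_smul [FiniteDimensional ℝ E] {x : E}
    (hu : DifferentiableAt ℝ u x) (hv : DifferentiableAt ℝ v x) (hw : DifferentiableAt ℝ w x) :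
    divergence (fun y => ⟪v y, w y⟫ • u y) x =
      divergence u x * ⟪v x, w x⟫ + ⟪fderiv ℝ v x (u x), w x⟫ + ⟪fderiv ℝ w x (u x), v x⟫ := by
  rw [divergence_smul (hv.inner ℝ hw) hu, fderiv_inner_apply ℝ hv hw, real_inner_comm (v x)]
  ring

theorem hasCompactSupport_inner_fderiv_apply
    (hc : IsCompact (tsupport u ∩ tsupport v ∩ tsupport w)) :
    HasCompactSupport (fun x => ⟪fderiv ℝ v x (u x), w x⟫) := by
  refine .intro hc fun x hx => ?_
  contrapose! hx
  refine ⟨⟨subset_tsupport u ?_, support_fderiv_subset ℝ (f := v) ?_⟩, subset_tsupport w ?_⟩ <;>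
    exact fun h => hx (by simp [h])

theorem hasCompactSupport_inner_smul (hc : IsCompact (tsupport u ∩ tsupport v ∩ tsupport w)) :
    HasCompactSupport (fun x => ⟪v x, w x⟫ • u x) := by
  refine .intro hc fun x hx => ?_
  contrapose! hx
  refine ⟨⟨subset_tsupport u ?_, subset_tsupport v ?_⟩, subset_tsupport w ?_⟩ <;>
    exact fun h => hx (by simp [h])

theorem hasCompactSupport_divergence_mul_inner
    (hc : IsCompact (tsupport u ∩ tsupport v ∩ tsupport w)) :
    HasCompactSupport (fun x => divergence u x * ⟪v x, w x⟫) := by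
  refine .intro hc fun x hx => ?_
  contrapose! hx
  refine ⟨⟨support_fderiv_subset ℝ (f := u) ?_, subset_tsupport v ?_⟩, subset_tsupport w ?_⟩ <;>
    exact fun h => hx (by simp [divergence, h])

variable [MeasurableSpace E]

/-- The convective form `∫ ((u·∇)v)·w`, with respect to an arbitrary measure. -/
def convectiveForm (μ : Measure E) (u v w : E → E) : ℝ :=
  ∫ x, ⟪fderiv ℝ v x (u x), w x⟫ ∂μ

/-- The EMAC form `∫ (2D(u)v)·w + (∇·u)(v·w)`, with respect to an arbitrary measure; the
symmetric gradient is expanded as `(2D(u)v)·w = ((v·∇)u)·w + ((w·∇)u)·v`. -/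
def emacForm (μ : Measure E) (u v w : E → E) : ℝ :=
  ∫ x, (⟪fderiv ℝ u x (v x), w x⟫ + ⟪fderiv ℝ u x (w x), v x⟫
    + divergence u x * ⟪v x, w x⟫) ∂μ

variable [BorelSpace E] {μ : Measure E}

theorem integrable_inner_fderiv_apply [IsFiniteMeasureOnCompacts μ]
    (hu : Continuous u) (hv : ContDiff ℝ 1 v) (hw : Continuous w)
    (hc : IsCompact (tsupport u ∩ tsupport v ∩ tsupport w)) :
    Integrable (fun x => ⟪fderiv ℝ v x (u x), w x⟫) μ :=
  (((hv.continuous_fderiv one_ne_zero).clm_apply hu).inner hw).integrable_of_hasCompactSupport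
    (hasCompactSupport_inner_fderiv_apply hc)

variable [FiniteDimensional ℝ E]

theorem integrable_divergence_mul_inner [IsFiniteMeasureOnCompacts μ]
    (hu : ContDiff ℝ 1 u) (hv : Continuous v) (hw : Continuous w)
    (hc : IsCompact (tsupport u ∩ tsupport v ∩ tsupport w)) :
    Integrable (fun x => divergence u x * ⟪v x, w x⟫) μ :=
  ((continuous_divergence hu).mul (hv.inner hw)).integrable_of_hasCompactSupport
    (hasCompactSupport_divergence_mul_inner hc)

variable [μ.IsAddHaarMeasure]

theorem integral_divergence_inner_smul_eq_zero
    (hu : ContDiff ℝ 1 u) (hv : ContDiff ℝ 1 v) (hw : ContDiff ℝ 1 w)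
    (hc : IsCompact (tsupport u ∩ tsupport v ∩ tsupport w)) :
    ∫ x, divergence (fun y => ⟪v y, w y⟫ • u y) x ∂μ = 0 := by
  have smooth : ContDiff ℝ 1 (fun x => ⟪v x, w x⟫ • u x) := (hv.inner ℝ hw).smul hu
  have compact := hasCompactSupport_inner_smul hc
  exact integral_divergence_eq_zero (smooth.differentiable one_ne_zero)
    (smooth.continuous.integrable_of_hasCompactSupport compact)
    ((smooth.continuous_fderiv one_ne_zero).integrable_of_hasCompactSupport (compact.fderiv ℝ))

theorem integral_divergence_mul_inner
    (hu : ContDiff ℝ 1 u) (hv : ContDiff ℝ 1 v) (hw : ContDiff ℝ 1 w)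
    (hc : IsCompact (tsupport u ∩ tsupport v ∩ tsupport w)) :
    ∫ x, divergence u x * ⟪v x, w x⟫ ∂μ = -convectiveForm μ u v w - convectiveForm μ u w v := by
  have hdiv : Integrable (fun x => divergence u x * ⟪v x, w x⟫) μ :=
    integrable_divergence_mul_inner hu hv.continuous hw.continuous hc
  have huvw : Integrable (fun x => ⟪fderiv ℝ v x (u x), w x⟫) μ :=
    integrable_inner_fderiv_apply hu.continuous hv hw.continuous hc
  have huwv : Integrable (fun x => ⟪fderiv ℝ w x (u x), v x⟫) μ :=
    integrable_inner_fderiv_apply hu.continuous hw hv.continuous (by rwa [Set.inter_right_comm])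
  have sum_eq_zero : ∫ x, divergence u x * ⟪v x, w x⟫ ∂μ + convectiveForm μ u v w
      + convectiveForm μ u w v = 0 := calc
    _ = ∫ x, (divergence u x * ⟪v x, w x⟫ + ⟪fderiv ℝ v x (u x), w x⟫
          + ⟪fderiv ℝ w x (u x), v x⟫) ∂μ := by
        rw [integral_add (hdiv.fun_add huvw) huwv, integral_add hdiv huvw,
          convectiveForm, convectiveForm]
    _ = ∫ x, divergence (fun y => ⟪v y, w y⟫ • u y) x ∂μ := by
        simp only [divergence_inner_smul (hu.differentiable one_ne_zero _)
          (hv.differentiable one_ne_zero _) (hw.differentiable one_ne_zero _)]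
    _ = 0 := integral_divergence_inner_smul_eq_zero hu hv hw hc
  linarith

theorem bEmac_eq_bConv_four_general
    (hu : ContDiff ℝ 1 u) (hv : ContDiff ℝ 1 v) (hw : ContDiff ℝ 1 w)
    (hc : IsCompact (tsupport u ∩ tsupport v ∩ tsupport w)) :
    emacForm μ u v w = convectiveForm μ v u w + convectiveForm μ w u v
      - convectiveForm μ u v w - convectiveForm μ u w v := by
  have hvuw : Integrable (fun x => ⟪fderiv ℝ u x (v x), w x⟫) μ :=
    integrable_inner_fderiv_apply hv.continuous hu hw.continuous
      (by rwa [Set.inter_comm (tsupport v)])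
  have hwuv : Integrable (fun x => ⟪fderiv ℝ u x (w x), v x⟫) μ :=
    integrable_inner_fderiv_apply hw.continuous hu hv.continuous
      (by rwa [Set.inter_assoc, Set.inter_comm])
  have hdiv : Integrable (fun x => divergence u x * ⟪v x, w x⟫) μ :=
    integrable_divergence_mul_inner hu hv.continuous hw.continuous hc
  calc emacForm μ u v w
      = convectiveForm μ v u w + convectiveForm μ w u v
          + ∫ x, divergence u x * ⟪v x, w x⟫ ∂μ := by
        rw [emacForm, integral_add (hvuw.fun_add hwuv) hdiv, integral_add hvuw hwuv,
          convectiveForm, convectiveForm]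
    _ = convectiveForm μ v u w + convectiveForm μ w u v
          - convectiveForm μ u v w - convectiveForm μ u w v := by
        rw [integral_divergence_mul_inner hu hv hw hc]
        ring

end TrilinearForms

theorem dvg_eq_divergence (u : E2 → E2) : dvg u = divergence u := by
  ext x
  rw [dvg, divergence, LinearMap.trace_eq_sum_inner _ (EuclideanSpace.basisFun (Fin 2) ℝ)]
  simp [EuclideanSpace.inner_single_left]

theorem bEmac_eq_emacForm (u v w : E2 → E2) : bEmac u v w = emacForm volume u v w := by
  rw [bEmac, emacForm, dvg_eq_divergence]

theorem bConv_eq_convectiveForm (u v w : E2 → E2) :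
    bConv u v w = convectiveForm volume u v w :=
  rfl

theorem bEmac_eq_bConv_four
    (u v w : E2 → E2)
    (hu : ContDiff ℝ 1 u) (hv : ContDiff ℝ 1 v) (hw : ContDiff ℝ 1 w)
    (hcu : HasCompactSupport u) (hcv : HasCompactSupport v)
    (hcw : HasCompactSupport w) :
    bEmac u v w = bConv v u w + bConv w u v - bConv u v w - bConv u w v := by
  simp only [bEmac_eq_emacForm, bConv_eq_convectiveForm]
  exact bEmac_eq_bConv_four_general hu hv hw
    ((hcu.isCompact.inter hcv.isCompact).inter hcw.isCompact)
end
end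

section
/- There exists a constant C > 0 such that for all continuously differentiable, compactly supported vector fields u, w : ℝ² → ℝ², |b_emac(u,u,w)| ≤ C ‖u‖_{H¹}² ‖u − w‖_{H¹}. -/
open MeasureTheory RealInnerProductSpace

noncomputable section

/-!
Since `(2 D(u) u) · u + (∇ · u) |u|² = ∇ · (|u|² u)`, the divergence theorem gives
`b_emac(u, u, u) = 0`, and therefore `b_emac(u, u, w) = - b_emac(u, u, u - w)`. Hölder's inequality
bounds the right-hand side by a multiple of `‖∇u‖_{L²} ‖u‖_{L⁴} ‖u - w‖_{L⁴}`. Finally, the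
Gagliardo–Nirenberg–Sobolev inequality `‖g‖_{L²} ≤ C ‖∇g‖_{L¹}` in the plane, applied to
`g = |f|²`, yields Ladyzhenskaya's inequality `‖f‖_{L⁴}² ≤ C ‖f‖_{L²} ‖∇f‖_{L²}`, by which the `L⁴`
norms are controlled by `H¹` norms.
-/

open Module
open scoped ENNReal NNReal

section Holder

variable {α F₁ F₂ F₃ G : Type*} [MeasurableSpace α] {μ : Measure α}
  [NormedAddCommGroup F₁] [NormedAddCommGroup F₂] [NormedAddCommGroup F₃] [NormedAddCommGroup G]

theorem eLpNorm_le_mul_eLpNorm_mul_eLpNorm_mul_eLpNorm_of_norm {p q r s t : ℝ≥0∞}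
    {f : α → F₁} {g : α → F₂} {h : α → F₃} {k : α → G} (c : ℝ≥0)
    (hf : AEStronglyMeasurable f μ) (hg : AEStronglyMeasurable g μ)
    (hh : AEStronglyMeasurable h μ) (hk : ∀ x, ‖k x‖ ≤ c * ‖f x‖ * ‖g x‖ * ‖h x‖)
    [ENNReal.HolderTriple q r s] [ENNReal.HolderTriple p s t] :
    eLpNorm k t μ ≤ c * eLpNorm f p μ * eLpNorm g q μ * eLpNorm h r μ := by
  have eLpNorm_gh_le : eLpNorm (fun x ↦ ‖g x‖ * ‖h x‖) s μ ≤ eLpNorm g q μ * eLpNorm h r μ := by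
    simpa using eLpNorm_le_eLpNorm_mul_eLpNorm'_of_norm hg hh (fun y z ↦ ‖y‖ * ‖z‖) 1
      (.of_forall fun x ↦ by simp)
  calc eLpNorm k t μ
      ≤ eLpNorm (fun x ↦ c * ‖f x‖ * (‖g x‖ * ‖h x‖)) t μ :=
        eLpNorm_mono_real fun x ↦ (hk x).trans_eq (mul_assoc _ _ _)
    _ ≤ c * eLpNorm f p μ * eLpNorm (fun x ↦ ‖g x‖ * ‖h x‖) s μ :=
        eLpNorm_le_eLpNorm_mul_eLpNorm'_of_norm hf (hg.norm.mul hh.norm)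
          (fun y z ↦ c * ‖y‖ * z) c (.of_forall fun x ↦ by simp)
    _ ≤ c * eLpNorm f p μ * eLpNorm g q μ * eLpNorm h r μ := by
        rw [mul_assoc _ (eLpNorm g q μ)]
        gcongr

instance holderTriple_four_four_two : ENNReal.HolderTriple 4 4 2 where
  inv_add_inv_eq_inv := by
    rw [← ENNReal.toReal_eq_toReal_iff' (by simp) (by simp), ENNReal.toReal_add (by simp) (by simp)]
    norm_num

end Holder

section Divergence

variable {E F : Type*} [NormedAddCommGroup E] [NormedSpace ℝ E]
  [NormedAddCommGroup F] [NormedSpace ℝ F]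

theorem memLp_fderiv_of_hasCompactSupport [MeasurableSpace E] [BorelSpace E]
    (μ : Measure E) [IsFiniteMeasureOnCompacts μ] {f : E → F} (hf : ContDiff ℝ 1 f)
    (hfc : HasCompactSupport f) (p : ℝ≥0∞) : MemLp (fderiv ℝ f) p μ :=
  (hf.continuous_fderiv one_ne_zero).memLp_of_hasCompactSupport (hfc.fderiv ℝ)

variable [FiniteDimensional ℝ E]

theorem trace_fderiv_smul {f : E → ℝ} {u : E → E} {x : E}
    (hf : DifferentiableAt ℝ f x) (hu : DifferentiableAt ℝ u x) :
    LinearMap.trace ℝ E (fderiv ℝ (fun y ↦ f y • u y) x)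
      = f x * LinearMap.trace ℝ E (fderiv ℝ u x) + fderiv ℝ f x (u x) := by
  rw [fderiv_fun_smul hf hu]
  simp

theorem continuous_trace : Continuous fun T : E →L[ℝ] E ↦ LinearMap.trace ℝ E T :=
  (LinearMap.trace ℝ E ∘ₗ ContinuousLinearMap.coeLM ℝ).continuous_of_finiteDimensional

variable [MeasurableSpace E] [BorelSpace E] (μ : Measure E) [μ.IsAddHaarMeasure]

theorem integral_fderiv_eq_zero {f : E → F} (hf : ContDiff ℝ 1 f) (hfc : HasCompactSupport f) :
    ∫ x, fderiv ℝ f x ∂μ = 0 := by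
  have integrable_fderiv : Integrable (fderiv ℝ f) μ :=
    memLp_one_iff_integrable.mp (memLp_fderiv_of_hasCompactSupport μ hf hfc 1)
  ext v
  rw [ContinuousLinearMap.integral_apply integrable_fderiv]
  simpa using integral_smul_fderiv_eq_neg_fderiv_smul_of_integrable
    (μ := μ) (f := fun _ ↦ (1 : ℝ)) (g := f) (v := v) (by simp)
    (by simpa using integrable_fderiv.apply_continuousLinearMap v)
    (by simpa using hf.continuous.integrable_of_hasCompactSupport hfc)
    (fun _ _ ↦ differentiableAt_const _) (fun x _ ↦ hf.differentiable one_ne_zero x)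

theorem integral_trace_fderiv_eq_zero {u : E → E} (hu : ContDiff ℝ 1 u)
    (huc : HasCompactSupport u) : ∫ x, LinearMap.trace ℝ E (fderiv ℝ u x) ∂μ = 0 := by
  let traceCLM : (E →L[ℝ] E) →L[ℝ] ℝ :=
    ⟨LinearMap.trace ℝ E ∘ₗ ContinuousLinearMap.coeLM ℝ, continuous_trace⟩
  have integrable_fderiv : Integrable (fderiv ℝ u) μ :=
    memLp_one_iff_integrable.mp (memLp_fderiv_of_hasCompactSupport μ hu huc 1)
  simpa [integral_fderiv_eq_zero μ hu huc] using! traceCLM.integral_comp_comm integrable_fderiv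

end Divergence

section Ladyzhenskaya

variable {E F : Type*} [NormedAddCommGroup E] [NormedSpace ℝ E]
  [NormedAddCommGroup F] [InnerProductSpace ℝ F]

theorem fderiv_fun_norm_sq {f : E → F} {x : E} (hf : DifferentiableAt ℝ f x) :
    fderiv ℝ (fun y ↦ ‖f y‖ ^ 2) x = 2 • (innerSL ℝ (f x)).comp (fderiv ℝ f x) :=
  hf.hasFDerivAt.norm_sq.fderiv

variable [FiniteDimensional ℝ E] [MeasurableSpace E] [BorelSpace E] (μ : Measure E)

theorem eLpNorm_fderiv_norm_sq_le {f : E → F} (hf : ContDiff ℝ 1 f) :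
    eLpNorm (fderiv ℝ fun x ↦ ‖f x‖ ^ 2) 1 μ ≤ 2 * eLpNorm f 2 μ * eLpNorm (fderiv ℝ f) 2 μ := by
  have fderiv_eq : (fderiv ℝ fun x ↦ ‖f x‖ ^ 2)
      = fun x ↦ 2 • (innerSL ℝ (f x)).comp (fderiv ℝ f x) :=
    funext fun x ↦ fderiv_fun_norm_sq (hf.differentiable one_ne_zero x)
  have norm_le (x : E) :
      ‖2 • (innerSL ℝ (f x)).comp (fderiv ℝ f x)‖ ≤ (2 : ℝ≥0) * ‖f x‖ * ‖fderiv ℝ f x‖ := by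
    rw [← Nat.cast_smul_eq_nsmul ℝ, norm_smul, mul_assoc]
    gcongr
    · simp
    · simpa using (innerSL ℝ (f x)).opNorm_comp_le (fderiv ℝ f x)
  rw [fderiv_eq]
  exact eLpNorm_le_eLpNorm_mul_eLpNorm'_of_norm hf.continuous.aestronglyMeasurable
    (hf.continuous_fderiv one_ne_zero).aestronglyMeasurable
    (fun y T ↦ 2 • (innerSL ℝ y).comp T) 2 (.of_forall norm_le)

variable [μ.IsAddHaarMeasure]

theorem eLpNorm_four_sq_le_eLpNorm_two_mul_eLpNorm_fderiv_two (hE : finrank ℝ E = 2) {f : E → F}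
    (hf : ContDiff ℝ 1 f) (hfc : HasCompactSupport f) :
    eLpNorm f 4 μ ^ 2
      ≤ eLpNormLESNormFDerivOneConst μ 2 * (2 * eLpNorm f 2 μ * eLpNorm (fderiv ℝ f) 2 μ) := by
  have eLpNorm_sq : eLpNorm (fun x ↦ ‖f x‖ ^ 2) 2 μ = eLpNorm f 4 μ ^ 2 := by
    have two_mul_two : (2 : ℝ≥0∞) * 2 = 4 := by norm_num
    simpa [two_mul_two] using eLpNorm_norm_rpow (p := 2) (μ := μ) f two_pos
  have norm_sq_hasCompactSupport : HasCompactSupport fun x ↦ ‖f x‖ ^ 2 :=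
    hfc.comp_left (g := fun y : F ↦ ‖y‖ ^ 2) (by simp)
  have two_conj : NNReal.HolderConjugate (finrank ℝ E) 2 := by
    rw [hE]
    exact_mod_cast NNReal.HolderConjugate.two_two
  calc eLpNorm f 4 μ ^ 2
      = eLpNorm (fun x ↦ ‖f x‖ ^ 2) 2 μ := eLpNorm_sq.symm
    _ ≤ eLpNormLESNormFDerivOneConst μ 2 * eLpNorm (fderiv ℝ fun x ↦ ‖f x‖ ^ 2) 1 μ :=
        eLpNorm_le_eLpNorm_fderiv_one μ (hf.norm_sq ℝ) norm_sq_hasCompactSupport two_conj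
    _ ≤ _ := by
        gcongr
        exact eLpNorm_fderiv_norm_sq_le μ hf

theorem lpNorm_four_sq_le_lpNorm_two_mul_lpNorm_fderiv_two (hE : finrank ℝ E = 2) {f : E → F}
    (hf : ContDiff ℝ 1 f) (hfc : HasCompactSupport f) :
    lpNorm f 4 μ ^ 2
      ≤ eLpNormLESNormFDerivOneConst μ 2 * (2 * lpNorm f 2 μ * lpNorm (fderiv ℝ f) 2 μ) := by
  have memLp_f (p : ℝ≥0∞) : MemLp f p μ := hf.continuous.memLp_of_hasCompactSupport hfc
  have memLp_fderiv : MemLp (fderiv ℝ f) 2 μ := memLp_fderiv_of_hasCompactSupport μ hf hfc 2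
  rw [← toReal_eLpNorm (memLp_f 4).1, ← toReal_eLpNorm (memLp_f 2).1,
    ← toReal_eLpNorm memLp_fderiv.1]
  simpa using ENNReal.toReal_mono (by finiteness [(memLp_f 2).2, memLp_fderiv.2])
    (eLpNorm_four_sq_le_eLpNorm_two_mul_eLpNorm_fderiv_two μ hE hf hfc)

end Ladyzhenskaya

section EmacDensity

variable {E : Type*} [NormedAddCommGroup E] [InnerProductSpace ℝ E]

/-- The integrand `(2 D v) · w + (tr T) (v · w)` of the EMAC form, where `D` is the symmetric part
of `T`, as a function of a velocity gradient `T = ∇u` and two velocities. The symmetric part is not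
formed explicitly: `(2 D v) · w = (T v) · w + (T w) · v`. -/
def emacDensity (T : E →L[ℝ] E) (v w : E) : ℝ :=
  ⟪T v, w⟫ + ⟪T w, v⟫ + LinearMap.trace ℝ E T * ⟪v, w⟫

theorem emacDensity_sub_right (T : E →L[ℝ] E) (v w₁ w₂ : E) :
    emacDensity T v (w₁ - w₂) = emacDensity T v w₁ - emacDensity T v w₂ := by
  simp only [emacDensity, map_sub, inner_sub_left, inner_sub_right]
  ring

variable [FiniteDimensional ℝ E]

theorem abs_trace_le_finrank_mul_norm (T : E →L[ℝ] E) :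
    |LinearMap.trace ℝ E T| ≤ finrank ℝ E * ‖T‖ := by
  have abs_inner_le (i : Fin (finrank ℝ E)) :
      |⟪stdOrthonormalBasis ℝ E i, T (stdOrthonormalBasis ℝ E i)⟫| ≤ ‖T‖ := by
    simpa using (abs_real_inner_le_norm (stdOrthonormalBasis ℝ E i) _).trans
      (mul_le_mul_of_nonneg_left (T.le_opNorm (stdOrthonormalBasis ℝ E i)) (norm_nonneg _))
  rw [LinearMap.trace_eq_sum_inner _ (stdOrthonormalBasis ℝ E)]
  simpa using (Finset.abs_sum_le_sum_abs _ Finset.univ).trans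
    (Finset.sum_le_sum fun i _ ↦ abs_inner_le i)

theorem norm_emacDensity_le (T : E →L[ℝ] E) (v w : E) :
    ‖emacDensity T v w‖ ≤ (2 + finrank ℝ E) * ‖T‖ * ‖v‖ * ‖w‖ := by
  have abs_inner_map_le (a b : E) : |⟪T a, b⟫| ≤ ‖T‖ * ‖a‖ * ‖b‖ :=
    (abs_real_inner_le_norm _ _).trans (by gcongr; exact T.le_opNorm a)
  calc ‖emacDensity T v w‖
      ≤ |⟪T v, w⟫| + |⟪T w, v⟫| + |LinearMap.trace ℝ E T| * |⟪v, w⟫| := by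
        rw [← abs_mul]
        exact abs_add_three _ _ _
    _ ≤ ‖T‖ * ‖v‖ * ‖w‖ + ‖T‖ * ‖w‖ * ‖v‖ + finrank ℝ E * ‖T‖ * (‖v‖ * ‖w‖) := by
        gcongr
        · exact abs_inner_map_le v w
        · exact abs_inner_map_le w v
        · exact abs_trace_le_finrank_mul_norm T
        · exact abs_real_inner_le_norm v w
    _ = (2 + finrank ℝ E) * ‖T‖ * ‖v‖ * ‖w‖ := by ring

theorem emacDensity_fderiv_self {u : E → E} {x : E} (hu : DifferentiableAt ℝ u x) :
    emacDensity (fderiv ℝ u x) (u x) (u x)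
      = LinearMap.trace ℝ E (fderiv ℝ (fun y ↦ ‖u y‖ ^ 2 • u y) x) := by
  rw [trace_fderiv_smul (hu.norm_sq ℝ) hu, fderiv_fun_norm_sq hu, emacDensity,
    real_inner_self_eq_norm_sq, real_inner_comm]
  simp only [smul_apply, ContinuousLinearMap.comp_apply, innerSL_apply_apply]
  ring

theorem continuous_emacDensity :
    Continuous fun z : (E →L[ℝ] E) × E × E ↦ emacDensity z.1 z.2.1 z.2.2 := by
  have continuous_trace_fst :
      Continuous fun z : (E →L[ℝ] E) × E × E ↦ LinearMap.trace ℝ E z.1 :=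
    continuous_trace.comp continuous_fst
  unfold emacDensity
  fun_prop

section Integral

variable {α : Type*} [MeasurableSpace α] {μ : Measure α} {T : α → E →L[ℝ] E} {v w : α → E}

theorem eLpNorm_emacDensity_le (hT : AEStronglyMeasurable T μ) (hv : AEStronglyMeasurable v μ)
    (hw : AEStronglyMeasurable w μ) :
    eLpNorm (fun x ↦ emacDensity (T x) (v x) (w x)) 1 μ
      ≤ ↑(2 + finrank ℝ E : ℝ≥0) * eLpNorm T 2 μ * eLpNorm v 4 μ * eLpNorm w 4 μ :=
  eLpNorm_le_mul_eLpNorm_mul_eLpNorm_mul_eLpNorm_of_norm (s := 2) _ hT hv hw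
    fun x ↦ by simpa using norm_emacDensity_le (T x) (v x) (w x)

theorem integrable_emacDensity (hT : MemLp T 2 μ) (hv : MemLp v 4 μ) (hw : MemLp w 4 μ) :
    Integrable (fun x ↦ emacDensity (T x) (v x) (w x)) μ := by
  rw [← memLp_one_iff_integrable]
  exact ⟨continuous_emacDensity.comp_aestronglyMeasurable (hT.1.prodMk (hv.1.prodMk hw.1)),
    (eLpNorm_emacDensity_le hT.1 hv.1 hw.1).trans_lt (by finiteness [hT.2, hv.2, hw.2])⟩

theorem abs_integral_emacDensity_le (hT : MemLp T 2 μ) (hv : MemLp v 4 μ) (hw : MemLp w 4 μ) :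
    |∫ x, emacDensity (T x) (v x) (w x) ∂μ|
      ≤ (2 + finrank ℝ E) * lpNorm T 2 μ * lpNorm v 4 μ * lpNorm w 4 μ := by
  have integrable_density := integrable_emacDensity hT hv hw
  calc |∫ x, emacDensity (T x) (v x) (w x) ∂μ|
      ≤ ∫ x, ‖emacDensity (T x) (v x) (w x)‖ ∂μ := abs_integral_le_integral_abs
    _ = (eLpNorm (fun x ↦ emacDensity (T x) (v x) (w x)) 1 μ).toReal := by
        rw [toReal_eLpNorm integrable_density.1, lpNorm_one_eq_integral_norm integrable_density.1]
    _ ≤ _ := by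
        rw [← toReal_eLpNorm hT.1, ← toReal_eLpNorm hv.1, ← toReal_eLpNorm hw.1]
        simpa only [ENNReal.toReal_mul, ENNReal.coe_toReal, NNReal.coe_add, NNReal.coe_ofNat,
          NNReal.coe_natCast] using ENNReal.toReal_mono (by finiteness [hT.2, hv.2, hw.2])
          (eLpNorm_emacDensity_le hT.1 hv.1 hw.1)

end Integral

variable [MeasurableSpace E] [BorelSpace E] (μ : Measure E) [μ.IsAddHaarMeasure]

theorem integral_emacDensity_fderiv_self_eq_zero {u : E → E} (hu : ContDiff ℝ 1 u)
    (huc : HasCompactSupport u) : ∫ x, emacDensity (fderiv ℝ u x) (u x) (u x) ∂μ = 0 := by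
  simp only [emacDensity_fderiv_self (hu.differentiable one_ne_zero _)]
  exact integral_trace_fderiv_eq_zero μ ((hu.norm_sq ℝ).smul hu) huc.smul_left

theorem abs_integral_emacDensity_fderiv_le_lpNorm_sub {u w : E → E} (hu : ContDiff ℝ 1 u)
    (huc : HasCompactSupport u) (hw : MemLp w 4 μ) :
    |∫ x, emacDensity (fderiv ℝ u x) (u x) (w x) ∂μ|
      ≤ (2 + finrank ℝ E) * lpNorm (fderiv ℝ u) 2 μ * lpNorm u 4 μ
        * lpNorm (fun x ↦ u x - w x) 4 μ := by
  have memLp_fderiv : MemLp (fderiv ℝ u) 2 μ := memLp_fderiv_of_hasCompactSupport μ hu huc 2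
  have memLp_u : MemLp u 4 μ := hu.continuous.memLp_of_hasCompactSupport huc
  have integral_sub_right : ∫ x, emacDensity (fderiv ℝ u x) (u x) (u x - w x) ∂μ
      = -∫ x, emacDensity (fderiv ℝ u x) (u x) (w x) ∂μ := by
    simp only [emacDensity_sub_right]
    rw [integral_sub (integrable_emacDensity memLp_fderiv memLp_u memLp_u)
      (integrable_emacDensity memLp_fderiv memLp_u hw),
      integral_emacDensity_fderiv_self_eq_zero μ hu huc, zero_sub]
  rw [← abs_neg, ← integral_sub_right]
  exact abs_integral_emacDensity_le memLp_fderiv memLp_u (memLp_u.sub hw)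

end EmacDensity

theorem dvg_eq_trace_fderiv (u : E2 → E2) (x : E2) :
    dvg u x = LinearMap.trace ℝ E2 (fderiv ℝ u x) := by
  simp [dvg, LinearMap.trace_eq_sum_inner _ (EuclideanSpace.basisFun (Fin 2) ℝ),
    EuclideanSpace.inner_single_left]

theorem bEmac_eq_integral_emacDensity (u v w : E2 → E2) :
    bEmac u v w = ∫ x, emacDensity (fderiv ℝ u x) (v x) (w x) := by
  simp only [bEmac, emacDensity, dvg_eq_trace_fderiv]

theorem l2Norm_nonneg {F : Type*} [NormedAddCommGroup F] (f : E2 → F) : 0 ≤ l2Norm f := by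
  unfold l2Norm
  positivity

theorem l2Norm_eq_lpNorm {F : Type*} [NormedAddCommGroup F] {f : E2 → F}
    (hf : AEStronglyMeasurable f) : l2Norm f = lpNorm f 2 volume := by
  simp [l2Norm, lpNorm_eq_integral_norm_rpow_toReal two_ne_zero ENNReal.ofNat_ne_top hf]

theorem h1Norm_nonneg (f : E2 → E2) : 0 ≤ h1Norm f :=
  add_nonneg (l2Norm_nonneg f) (l2Norm_nonneg (fderiv ℝ f))

theorem lpNorm_fderiv_two_le_h1Norm {f : E2 → E2} (hf : ContDiff ℝ 1 f) :
    lpNorm (fderiv ℝ f) 2 volume ≤ h1Norm f := by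
  rw [← l2Norm_eq_lpNorm (hf.continuous_fderiv one_ne_zero).aestronglyMeasurable]
  exact le_add_of_nonneg_left (l2Norm_nonneg f)

theorem exists_lpNorm_four_le_mul_h1Norm :
    ∃ K : ℝ, 0 < K ∧ ∀ f : E2 → E2, ContDiff ℝ 1 f → HasCompactSupport f →
      lpNorm f 4 volume ≤ K * h1Norm f := by
  let c : ℝ := eLpNormLESNormFDerivOneConst (volume : Measure E2) 2
  have c_nonneg : 0 ≤ c := NNReal.coe_nonneg _
  refine ⟨c + 1, by positivity, fun f hf hfc ↦ ?_⟩
  have ladyzhenskaya := lpNorm_four_sq_le_lpNorm_two_mul_lpNorm_fderiv_two volume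
    finrank_euclideanSpace_fin hf hfc
  rw [← l2Norm_eq_lpNorm hf.continuous.aestronglyMeasurable,
    ← l2Norm_eq_lpNorm (hf.continuous_fderiv one_ne_zero).aestronglyMeasurable] at ladyzhenskaya
  have two_mul_le_h1Norm_sq : 2 * l2Norm f * l2Norm (fderiv ℝ f) ≤ h1Norm f ^ 2 := by
    rw [h1Norm, add_sq]
    linarith [sq_nonneg (l2Norm f), sq_nonneg (l2Norm (fderiv ℝ f))]
  refine le_of_sq_le_sq ?_ (mul_nonneg (by positivity) (h1Norm_nonneg f))
  calc lpNorm f 4 volume ^ 2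
      ≤ c * (2 * l2Norm f * l2Norm (fderiv ℝ f)) := ladyzhenskaya
    _ ≤ c * h1Norm f ^ 2 := by gcongr
    _ ≤ (c + 1) ^ 2 * h1Norm f ^ 2 := by
        gcongr
        nlinarith [c_nonneg]
    _ = ((c + 1) * h1Norm f) ^ 2 := (mul_pow _ _ _).symm

theorem bEmac_bound_diff_h1
    : ∃ C : ℝ, 0 < C ∧ ∀ u w : E2 → E2,
      ContDiff ℝ 1 u → ContDiff ℝ 1 w →
      HasCompactSupport u → HasCompactSupport w →
      |bEmac u u w| ≤ C * h1Norm u ^ 2 * h1Norm (fun x => u x - w x) := by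
  obtain ⟨K, K_pos, lpNorm_four_le⟩ := exists_lpNorm_four_le_mul_h1Norm
  refine ⟨4 * K ^ 2, by positivity, fun u w hu hw huc hwc ↦ ?_⟩
  have hw4 : MemLp w 4 volume := hw.continuous.memLp_of_hasCompactSupport hwc
  have h1Norm_u_nonneg := h1Norm_nonneg u
  calc |bEmac u u w|
      ≤ 4 * lpNorm (fderiv ℝ u) 2 volume * lpNorm u 4 volume
          * lpNorm (fun x ↦ u x - w x) 4 volume := by
        rw [bEmac_eq_integral_emacDensity]
        convert abs_integral_emacDensity_fderiv_le_lpNorm_sub volume hu huc hw4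
        norm_num [finrank_euclideanSpace_fin]
    _ ≤ 4 * h1Norm u * (K * h1Norm u) * (K * h1Norm (fun x ↦ u x - w x)) := by
        gcongr
        · exact lpNorm_nonneg
        · exact lpNorm_nonneg
        · exact lpNorm_fderiv_two_le_h1Norm hu
        · exact lpNorm_four_le u hu huc
        · exact lpNorm_four_le _ (hu.sub hw) (huc.sub hwc)
    _ = 4 * K ^ 2 * h1Norm u ^ 2 * h1Norm (fun x ↦ u x - w x) := by ring
end
end
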